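/- arXiv:1010.0083 — 9 statements merged into one kernel-verified Lean document; each statement's English description precedes it below -/
import Mathlib

section
/- Let E be a real inner product space with unit sphere S = {x ∈ E : ‖x‖ = 1}, and let u, v ∈ S with v ≠ -u. For all s, t ≥ 0 with s + t = 1, the point w = (s•u + t•v) / ‖s•u + t•v‖ satisfies arccos⟪u,w⟫ + arccos⟪w,v⟫ = arccos⟪u,v⟫. In particular, the geodesic segment [u,v] realizes the spherical distance between u and v. -/
/-!
On unit vectors `arccos ⟪x, y⟫` is the unoriented angle between `x` and `y`. The point
`w = (s • u + t • v) / ‖s • u + t • v‖` has norm one (the combination vanishes only when `v = -u`)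
and lies in the cone spanned by `u` and `v`, which is the equality case of the triangle inequality
for angles, `InnerProductGeometry.angle_eq_angle_add_add_angle_add_of_mem_span`.
-/

open RealInnerProductSpace

/-- The unit sphere of `E`. -/
def unitSphere (E : Type*) [NormedAddCommGroup E] : Set E := {x : E | ‖x‖ = 1}

/-- The geodesic segment from `u` to `v` on the unit sphere (for `v ≠ -u`). -/
def geoSeg {E : Type*} [NormedAddCommGroup E] [InnerProductSpace ℝ E] (u v : E) : Set E :=
  {w : E | ∃ s t : ℝ, 0 ≤ s ∧ 0 ≤ t ∧ s + t = 1 ∧ w = ‖s • u + t • v‖⁻¹ • (s • u + t • v)}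

/-- A subset of the unit sphere is spherically convex if it contains the geodesic
segment between any two of its non-antipodal points. -/
def SphConvex {E : Type*} [NormedAddCommGroup E] [InnerProductSpace ℝ E] (A : Set E) : Prop :=
  ∀ u ∈ A, ∀ v ∈ A, v ≠ -u → geoSeg u v ⊆ A

lemma arccos_inner_eq_angle {E : Type*} [NormedAddCommGroup E] [InnerProductSpace ℝ E]
    {x y : E} (hx : ‖x‖ = 1) (hy : ‖y‖ = 1) :
    Real.arccos ⟪x, y⟫ = InnerProductGeometry.angle x y := by
  simp [InnerProductGeometry.angle, hx, hy]

lemma smul_add_smul_ne_zero {E : Type*} [NormedAddCommGroup E] [InnerProductSpace ℝ E]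
    {u v : E} (hu : ‖u‖ = 1) (hv : ‖v‖ = 1) (hne : v ≠ -u)
    {s t : ℝ} (hs : 0 ≤ s) (ht : 0 ≤ t) (hst : s + t = 1) : s • u + t • v ≠ 0 := by
  intro h
  -- Comparing the norms of `s • u = -(t • v)` forces `s = t`.
  have heq : s = t := by
    have := congrArg norm (eq_neg_of_add_eq_zero_left h)
    simpa [norm_smul, hu, hv, abs_of_nonneg hs, abs_of_nonneg ht] using this
  subst heq
  have hs0 : s ≠ 0 := by rintro rfl; norm_num at hst
  rw [← smul_add, smul_eq_zero_iff_right hs0] at h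
  exact hne (eq_neg_of_add_eq_zero_right h)

theorem geoSeg_realizes_distance {E : Type*} [NormedAddCommGroup E] [InnerProductSpace ℝ E]
    (u v : E) (hu : ‖u‖ = 1) (hv : ‖v‖ = 1) (hne : v ≠ -u)
    (s t : ℝ) (hs : 0 ≤ s) (ht : 0 ≤ t) (hst : s + t = 1) :
    Real.arccos ⟪u, ‖s • u + t • v‖⁻¹ • (s • u + t • v)⟫ +
      Real.arccos ⟪‖s • u + t • v‖⁻¹ • (s • u + t • v), v⟫ = Real.arccos ⟪u, v⟫ := by
  have hy := smul_add_smul_ne_zero hu hv hne hs ht hst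
  set y := s • u + t • v with hydef
  have hw : ‖‖y‖⁻¹ • y‖ = 1 := by
    rw [norm_smul, norm_inv, norm_norm, inv_mul_cancel₀ (norm_ne_zero_iff.mpr hy)]
  have hpos : 0 < ‖y‖⁻¹ := inv_pos.mpr (norm_pos_iff.mpr hy)
  rw [arccos_inner_eq_angle hu hw, arccos_inner_eq_angle hw hv, arccos_inner_eq_angle hu hv,
    InnerProductGeometry.angle_smul_right_of_pos _ _ hpos,
    InnerProductGeometry.angle_smul_left_of_pos _ _ hpos]
  refine (InnerProductGeometry.angle_eq_angle_add_add_angle_add_of_mem_span hy ?_).symm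
  exact Submodule.mem_span_pair.mpr ⟨⟨s, hs⟩, ⟨t, ht⟩, rfl⟩
end

section
/- Let E be a real inner product space with unit sphere S = {x ∈ E : ‖x‖ = 1}, and let u, v, w ∈ S with v ≠ -u. If arccos⟪u,w⟫ + arccos⟪w,v⟫ = arccos⟪u,v⟫, then w lies on the geodesic segment [u,v], i.e. there exist s, t ≥ 0 with s + t = 1 and w = (s•u + t•v) / ‖s•u + t•v‖. (Any two points at spherical distance < π are joined by a unique geodesic segment.) -/
/-!
Between unit vectors the spherical distance is the angle, so the hypothesis is the equality case
of the triangle inequality for angles, `InnerProductGeometry.angle_eq_angle_add_angle_iff`: either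
`u` and `v` make an angle `π`, hence are antipodal, which is excluded, or `w = a • u + b • v` with
`a, b ≥ 0`. In the latter case `w` is the normalization of the convex combination with weights
`a / (a + b)` and `b / (a + b)`.
-/

open RealInnerProductSpace

theorem mem_geoSeg_of_dist_add {E : Type*} [NormedAddCommGroup E] [InnerProductSpace ℝ E]
    (u v w : E) (hu : ‖u‖ = 1) (hv : ‖v‖ = 1) (hw : ‖w‖ = 1) (hne : v ≠ -u)
    (h : Real.arccos ⟪u, w⟫ + Real.arccos ⟪w, v⟫ = Real.arccos ⟪u, v⟫) :
    w ∈ geoSeg u v := by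
  have hw0 : w ≠ 0 := by
    rintro rfl
    simp at hw
  have key : InnerProductGeometry.angle u v =
      InnerProductGeometry.angle u w + InnerProductGeometry.angle w v := by
    simp only [InnerProductGeometry.angle, hu, hv, hw, mul_one, div_one]
    exact h.symm
  rcases (InnerProductGeometry.angle_eq_angle_add_angle_iff hw0).1 key with hpi | hspan
  -- An angle of `π` between unit vectors forces them to be antipodal.
  · exfalso
    obtain ⟨-, r, hr, rfl⟩ := InnerProductGeometry.angle_eq_pi_iff.1 hpi
    rw [norm_smul, hu, mul_one, Real.norm_eq_abs, abs_of_neg hr] at hv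
    apply hne
    rw [show r = -1 by linarith, neg_one_smul]
  · obtain ⟨a, b, hab⟩ := Submodule.mem_span_pair.1 hspan
    have hab' : (a : ℝ) • u + (b : ℝ) • v = w := hab
    have ha : (0 : ℝ) ≤ a := a.2
    have hb : (0 : ℝ) ≤ b := b.2
    -- `a = b = 0` would give `w = 0`.
    have hc : (0 : ℝ) < a + b := by
      refine lt_of_le_of_ne (add_nonneg ha hb) fun h0 => hw0 ?_
      rw [← hab', show (a : ℝ) = 0 by linarith, show (b : ℝ) = 0 by linarith]
      simp
    have hsum : ((a : ℝ) / (a + b)) • u + ((b : ℝ) / (a + b)) • v = ((a : ℝ) + b)⁻¹ • w := by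
      rw [← hab', smul_add, smul_smul, smul_smul, div_eq_inv_mul, div_eq_inv_mul]
    refine ⟨a / (a + b), b / (a + b), by positivity, by positivity, by field_simp, ?_⟩
    rw [hsum, norm_smul, hw, mul_one, norm_inv, Real.norm_of_nonneg hc.le, inv_inv,
      smul_inv_smul₀ hc.ne']
end

section
/- Let E be a finite-dimensional real inner product space with unit sphere S, let V ⊆ E be a linear subspace, let C ⊆ V ∩ S be a nonempty subset that is open in the subspace topology of V ∩ S, and let u ∈ S with u ∉ V. Then the union Y = ⋃_{c ∈ C} [u,c] of the geodesic segments from u to points of C has nonempty interior in the subspace topology of W ∩ S, where W = V + span{u}. -/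
/-!
Pick a linear functional `f` vanishing on `V` with `f u = 1`. Every `w ∈ V + span {u}` splits as
`w = f w • u + p w` with `p w = w - f w • u ∈ V`. Writing `C = V ∩ S ∩ O` with `O` open in `E`, the
set of points `w` with `f w > 0`, `p w ≠ 0` and `p w / ‖p w‖ ∈ O` is open in `E`. A unit vector of
`V + span {u}` in this set is a positive combination of `u` and `p w / ‖p w‖ ∈ C`, so it lies
on a segment of the cone; and the normalization of `u + c`, for any `c ∈ C`, is such a vector.
-/

open RealInnerProductSpace

/-- A unit vector that is a combination of `u` and `c` with positive coefficients, not necessarily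
summing to one, lies on the geodesic segment from `u` to `c`. -/
lemma mem_geoSeg_of_pos {E : Type*} [NormedAddCommGroup E] [InnerProductSpace ℝ E]
    {u c w : E} {a r : ℝ} (ha : 0 < a) (hr : 0 < r) (hw : ‖w‖ = 1) (h : w = a • u + r • c) :
    w ∈ geoSeg u c := by
  have hpos : 0 < a + r := add_pos ha hr
  have key : (a / (a + r)) • u + (r / (a + r)) • c = (a + r)⁻¹ • w := by
    rw [h, smul_add, smul_smul, smul_smul, div_eq_inv_mul, div_eq_inv_mul]
  refine ⟨a / (a + r), r / (a + r), by positivity, by positivity, by field_simp, ?_⟩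
  rw [key, norm_smul, hw, mul_one, norm_inv, Real.norm_of_nonneg hpos.le, inv_inv, smul_smul,
    mul_inv_cancel₀ hpos.ne', one_smul]

theorem cone_over_open_set_has_nonempty_interior
    {E : Type*} [NormedAddCommGroup E] [InnerProductSpace ℝ E] [FiniteDimensional ℝ E]
    (V : Submodule ℝ E) (C : Set E) (hC : C ⊆ (V : Set E) ∩ unitSphere E)
    (hCne : C.Nonempty)
    (hCopen : IsOpen (Subtype.val ⁻¹' C : Set ((V : Set E) ∩ unitSphere E : Set E)))
    (u : E) (hu : u ∈ unitSphere E) (huV : u ∉ V) :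
    (interior (Subtype.val ⁻¹' (⋃ c ∈ C, geoSeg u c) :
      Set (((V ⊔ Submodule.span ℝ {u} : Submodule ℝ E) : Set E) ∩ unitSphere E : Set E))).Nonempty := by
  obtain ⟨f, hfu, hfV⟩ : ∃ f : E →ₗ[ℝ] ℝ, f u = 1 ∧ ∀ v ∈ V, f v = 0 := by
    obtain ⟨g, hgu, hgV⟩ := Submodule.exists_le_ker_of_notMem huV
    refine ⟨(g u)⁻¹ • g, by simp [hgu], fun v hv => ?_⟩
    have : g v = 0 := hgV hv
    simp [this]
  have hf : Continuous f := f.continuous_of_finiteDimensional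
  obtain ⟨O, hO, hOC⟩ := isOpen_induced_iff.1 hCopen
  have hOC' : ∀ x (hx : x ∈ (V : Set E) ∩ unitSphere E), x ∈ O ↔ x ∈ C := fun x hx =>
    Set.ext_iff.1 hOC ⟨x, hx⟩
  let p : E → E := fun w => w - f w • u
  have hp : Continuous p := by fun_prop
  have hpo : IsOpen {w | p w ≠ 0} := isOpen_ne_fun hp continuous_const
  have hcont : ContinuousOn (fun w => ‖p w‖⁻¹ • p w) {w | p w ≠ 0} :=
    (hp.norm.continuousOn.inv₀ fun w hw => norm_ne_zero_iff.2 hw).smul hp.continuousOn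
  have hopen : IsOpen ({w | 0 < f w} ∩ ({w | p w ≠ 0} ∩ (fun w => ‖p w‖⁻¹ • p w) ⁻¹' O)) :=
    (isOpen_lt continuous_const hf).inter (hcont.isOpen_inter_preimage hpo hO)
  obtain ⟨c, hc⟩ := hCne
  obtain ⟨hcV, hcS⟩ := hC hc
  have hcn : ‖c‖ = 1 := hcS
  have hc0 : c ≠ 0 := norm_ne_zero_iff.1 (by simp [hcn])
  have hfs : f (u + c) = 1 := by rw [map_add, hfu, hfV c hcV, add_zero]
  have hs0 : u + c ≠ 0 := fun h => by simp [h] at hfs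
  have hk : 0 < ‖u + c‖⁻¹ := inv_pos.2 (norm_pos_iff.2 hs0)
  set k := ‖u + c‖⁻¹ with hkdef
  have hfw : f (k • (u + c)) = k := by rw [map_smul, hfs, smul_eq_mul, mul_one]
  have hpw : p (k • (u + c)) = k • c := by
    simp only [p]
    rw [hfw, smul_add, add_sub_cancel_left]
  refine ⟨⟨k • (u + c), ?_, ?_⟩, mem_interior.2 ⟨_, ?_, hopen.preimage continuous_subtype_val, ?_⟩⟩
  · exact Submodule.smul_mem _ _ (add_mem
      (Submodule.mem_sup_right (Submodule.mem_span_singleton_self u)) (Submodule.mem_sup_left hcV))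
  · exact norm_smul_inv_norm (𝕜 := ℝ) hs0
  · rintro ⟨w, hwW, hwS⟩ ⟨hw1, hw2, hw3⟩
    have hpV : p w ∈ V := by
      obtain ⟨v, hv, y, hy, rfl⟩ := Submodule.mem_sup.1 hwW
      obtain ⟨b, rfl⟩ := Submodule.mem_span_singleton.1 hy
      have : p (v + b • u) = v := by simp [p, hfV v hv, hfu]
      rwa [this]
    have hn : 0 < ‖p w‖ := norm_pos_iff.2 hw2
    refine Set.mem_iUnion₂.2 ⟨‖p w‖⁻¹ • p w, (hOC' _ ⟨V.smul_mem _ hpV, ?_⟩).1 hw3,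
      mem_geoSeg_of_pos hw1 hn hwS ?_⟩
    · exact norm_smul_inv_norm (𝕜 := ℝ) hw2
    · rw [smul_smul, mul_inv_cancel₀ hn.ne', one_smul]
      simp [p]
  · refine ⟨?_, ?_, ?_⟩
    · change 0 < f (k • (u + c))
      rwa [hfw]
    · change p (k • (u + c)) ≠ 0
      rw [hpw]
      exact smul_ne_zero hk.ne' hc0
    · change ‖p (k • (u + c))‖⁻¹ • p (k • (u + c)) ∈ O
      rw [hpw, norm_smul, hcn, mul_one, Real.norm_of_nonneg hk.le, smul_smul,
        inv_mul_cancel₀ hk.ne', one_smul]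
      exact (hOC' c (hC hc)).2 hc
end

section
/- Let E be a finite-dimensional real inner product space with unit sphere S, let A ⊆ S be spherically convex, let V ⊆ E be a linear subspace, and let B ⊆ A ∩ V be a nonempty set that is open in the subspace topology of V ∩ S. If there exists u ∈ A with u ∉ V, then A contains a nonempty subset that is open in the subspace topology of W ∩ S, where W = V + span{u}. (A convex set of spherical dimension m is contained in the span of any of its m-simplices.) -/
/-! Choose a linear functional `f` that vanishes on `V` and has `f u = 1`. Then `p x = x - f x • u`
projects `W = V + span {u}` onto `V`, and every `x ∈ W` is `p x + f x • u`. If `f x > 0` and the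
normalization of `p x` lies in `B`, then `x` is a positive combination of `u ∈ A` and a point of
`B ⊆ A`, so it lies on a geodesic segment of `A`. These two conditions are open in `x`, and
the midpoint of the segment from any `b ∈ B` to `u` satisfies them. -/

open RealInnerProductSpace

/-- A spherically convex set contains every unit vector in the open cone spanned by two of its
non-antipodal points. -/
lemma SphConvex.mem_of_eq_add {E : Type*} [NormedAddCommGroup E] [InnerProductSpace ℝ E]
    {A : Set E} (hA : SphConvex A) {b u x : E} (hb : b ∈ A) (hu : u ∈ A) (hne : u ≠ -b)
    {s t : ℝ} (hs : 0 < s) (ht : 0 < t) (hx : ‖x‖ = 1) (hxe : x = s • b + t • u) : x ∈ A := by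
  have hst : 0 < s + t := by positivity
  refine hA b hb u hu hne ⟨s / (s + t), t / (s + t), by positivity, by positivity, by
    field_simp, ?_⟩
  have h : (s / (s + t)) • b + (t / (s + t)) • u = (s + t)⁻¹ • x := by
    rw [hxe, smul_add, smul_smul, smul_smul, div_eq_inv_mul, div_eq_inv_mul]
  rw [h, norm_smul, hx, mul_one, norm_inv, inv_inv, Real.norm_of_nonneg hst.le, smul_smul,
    mul_inv_cancel₀ hst.ne', one_smul]

theorem sphConvex_contains_open_subset_of_larger_sphere
    {E : Type*} [NormedAddCommGroup E] [InnerProductSpace ℝ E] [FiniteDimensional ℝ E]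
    (A : Set E) (hA : A ⊆ unitSphere E) (hAconv : SphConvex A)
    (V : Submodule ℝ E) (B : Set E) (hB : B ⊆ A ∩ (V : Set E)) (hBne : B.Nonempty)
    (hBopen : IsOpen (Subtype.val ⁻¹' B : Set ((V : Set E) ∩ unitSphere E : Set E)))
    (u : E) (huA : u ∈ A) (huV : u ∉ V) :
    ∃ B' : Set E, B' ⊆ A ∧ B'.Nonempty ∧
      B' ⊆ ((V ⊔ Submodule.span ℝ {u} : Submodule ℝ E) : Set E) ∩ unitSphere E ∧
      IsOpen (Subtype.val ⁻¹' B' :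
        Set (((V ⊔ Submodule.span ℝ {u} : Submodule ℝ E) : Set E) ∩ unitSphere E : Set E)) := by
  obtain ⟨U, hU, hUB⟩ := isOpen_induced_iff.1 hBopen
  have hmemB : ∀ y ∈ V, ‖y‖ = 1 → (y ∈ U ↔ y ∈ B) := fun y hyV hy =>
    Set.ext_iff.1 hUB ⟨y, hyV, hy⟩
  obtain ⟨f, hfu, hfV⟩ : ∃ f : E →ₗ[ℝ] ℝ, f u = 1 ∧ ∀ v ∈ V, f v = 0 := by
    obtain ⟨g, hgu, hgV⟩ := Submodule.exists_le_ker_of_notMem huV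
    refine ⟨(g u)⁻¹ • g, ?_, fun v hv => ?_⟩
    · simp [hgu]
    · simp [LinearMap.mem_ker.1 (hgV hv)]
  have hfc : Continuous f := f.continuous_of_finiteDimensional
  set p : E → E := fun x => x - f x • u with hp
  have hpc : Continuous p := by fun_prop
  have hpV : ∀ x ∈ V ⊔ Submodule.span ℝ {u}, p x ∈ V := by
    intro x hx
    obtain ⟨v, hv, w, hw, rfl⟩ := Submodule.mem_sup.1 hx
    obtain ⟨c, rfl⟩ := Submodule.mem_span_singleton.1 hw
    simpa [hp, hfV v hv, hfu] using hv
  have hune : ∀ b ∈ V, u ≠ -b := fun b hb h => huV (h ▸ V.neg_mem hb)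
  set O : Set E := {x | 0 < f x} ∩ ({x | p x ≠ 0} ∩ (fun x => ‖p x‖⁻¹ • p x) ⁻¹' U) with hO
  have hOopen : IsOpen O := by
    refine (isOpen_lt continuous_const hfc).inter (ContinuousOn.isOpen_inter_preimage ?_
      (isOpen_ne_fun hpc continuous_const) hU)
    exact (hpc.norm.continuousOn.inv₀ fun x hx => norm_ne_zero_iff.2 hx).smul hpc.continuousOn
  refine ⟨O ∩ (((V ⊔ Submodule.span ℝ {u} : Submodule ℝ E) : Set E) ∩ unitSphere E), ?_, ?_,
    Set.inter_subset_right, ?_⟩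
  · rintro x ⟨⟨hfx, hpx, hxU⟩, hxW, hxS⟩
    have hpos : 0 < ‖p x‖ := norm_pos_iff.2 hpx
    have hbV : ‖p x‖⁻¹ • p x ∈ V := V.smul_mem _ (hpV x hxW)
    have hbB := (hmemB _ hbV (norm_smul_inv_norm (𝕜 := ℝ) hpx)).1 hxU
    refine hAconv.mem_of_eq_add (hB hbB).1 huA (hune _ hbV) hpos hfx hxS ?_
    rw [smul_smul, mul_inv_cancel₀ hpos.ne', one_smul]
    simp [hp]
  · obtain ⟨b, hb⟩ := hBne
    have hbV : b ∈ V := (hB hb).2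
    have hb1 : ‖b‖ = 1 := hA (hB hb).1
    have hne : b + u ≠ 0 := fun h => hune b hbV (eq_neg_of_add_eq_zero_right h)
    have hpos : 0 < ‖b + u‖⁻¹ := inv_pos.2 (norm_pos_iff.2 hne)
    have hfm : f (‖b + u‖⁻¹ • (b + u)) = ‖b + u‖⁻¹ := by simp [hfV b hbV, hfu]
    have hpm : p (‖b + u‖⁻¹ • (b + u)) = ‖b + u‖⁻¹ • b := by
      simp only [hp, hfm]
      rw [smul_add, add_sub_cancel_right]
    have hb0 : b ≠ 0 := norm_ne_zero_iff.1 (by simp [hb1])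
    refine ⟨‖b + u‖⁻¹ • (b + u), ⟨?_, ?_, ?_⟩, ?_, norm_smul_inv_norm (𝕜 := ℝ) hne⟩
    · rw [Set.mem_ofPred_eq, hfm]
      exact hpos
    · rw [Set.mem_ofPred_eq, hpm]
      exact smul_ne_zero hpos.ne' hb0
    · rw [Set.mem_preimage, hpm, norm_smul, hb1, mul_one, Real.norm_of_nonneg hpos.le, smul_smul,
        inv_mul_cancel₀ hpos.ne', one_smul]
      exact (hmemB b hbV hb1).2 hb
    · exact Submodule.smul_mem _ _ (Submodule.add_mem_sup hbV (Submodule.mem_span_singleton_self u))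
  · rw [Set.preimage_inter, Subtype.coe_preimage_self, Set.inter_univ]
    exact hOopen.preimage continuous_subtype_val
end

section
/- Let E be a finite-dimensional real inner product space with unit sphere S, let A ⊆ S be spherically convex, let V ⊆ E be a nonzero linear subspace, and let B ⊆ V ∩ S be a nonempty set that is open in the subspace topology of V ∩ S. If B ⊆ A and -B = {-b : b ∈ B} ⊆ A, then V ∩ S ⊆ A. (If a convex set contains a top-dimensional simplex together with its opposite, it contains the whole great sphere they span.) -/
/-!
Fix `b ∈ B` and a unit vector `x ∈ V`. For small `ε > 0` the normalisation `c` of `b + ε • x` lies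
in `B`, because `B` is open in `V ∩ S`. As `ε • x = ‖b + ε • x‖ • c + 1 • (-b)`, the point `x` lies
on the geodesic segment from `c ∈ A` to `-b ∈ A`. These endpoints are antipodal only if `c = b`,
and then `x` is a multiple of `b`, so `x = ± b` is in `A` anyway.
-/

open RealInnerProductSpace

/-- A unit vector in the convex cone spanned by `u` and `v` lies on the geodesic segment: the
coefficients need not sum to one, since the normalisation absorbs a positive scalar. -/
theorem mem_geoSeg_of_cone {E : Type*} [NormedAddCommGroup E] [InnerProductSpace ℝ E]
    {u v x : E} (hx : ‖x‖ = 1) {p q k : ℝ} (hp : 0 < p) (hq : 0 < q) (hk : 0 < k)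
    (h : p • u + q • v = k • x) : x ∈ geoSeg u v := by
  have hpq : 0 < p + q := by positivity
  have key : (p / (p + q)) • u + (q / (p + q)) • v = (k / (p + q)) • x := by
    simp only [div_eq_inv_mul, mul_smul, ← smul_add, h]
  have hkpos : 0 < k / (p + q) := by positivity
  refine ⟨p / (p + q), q / (p + q), by positivity, by positivity, by field_simp, ?_⟩
  rw [key, norm_smul, hx, mul_one, Real.norm_of_nonneg hkpos.le, inv_smul_smul₀ hkpos.ne']

theorem sphere_subset_of_convex_contains_open_and_neg
    {E : Type*} [NormedAddCommGroup E] [InnerProductSpace ℝ E] [FiniteDimensional ℝ E]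
    (A : Set E) (hA : A ⊆ unitSphere E) (hAconv : SphConvex A)
    (V : Submodule ℝ E) (hV : V ≠ ⊥)
    (B : Set E) (hB : B ⊆ (V : Set E) ∩ unitSphere E) (hBne : B.Nonempty)
    (hBopen : IsOpen (Subtype.val ⁻¹' B : Set ((V : Set E) ∩ unitSphere E : Set E)))
    (hBA : B ⊆ A) (hnegBA : (fun b : E => -b) '' B ⊆ A) :
    (V : Set E) ∩ unitSphere E ⊆ A := by
  obtain ⟨b, hb⟩ := hBne
  have hbV : b ∈ V := (hB hb).1
  have hb1 : ‖b‖ = 1 := (hB hb).2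
  have hnb : -b ∈ A := hnegBA ⟨b, hb, rfl⟩
  rintro x ⟨hxV, hx⟩
  have hx1 : ‖x‖ = 1 := hx
  obtain ⟨U, hU, hUB⟩ := isOpen_induced_iff.1 hBopen
  have hmem : ∀ y (hy : y ∈ (V : Set E) ∩ unitSphere E), y ∈ U ↔ y ∈ B := fun y hy =>
    Set.ext_iff.1 hUB ⟨y, hy⟩
  have hb0 : b ≠ 0 := norm_ne_zero_iff.1 (by rw [hb1]; exact one_ne_zero)
  have hcont : ContinuousAt (fun ε : ℝ => b + ε • x) 0 := by fun_prop
  have hne : ∀ᶠ ε : ℝ in nhds 0, b + ε • x ≠ 0 := hcont.eventually_ne (by simpa using hb0)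
  have hcont' : ContinuousAt (fun ε : ℝ => ‖b + ε • x‖⁻¹ • (b + ε • x)) 0 :=
    (hcont.norm.inv₀ (by simpa using hb0)).smul hcont
  have hev : ∀ᶠ ε : ℝ in nhds 0, ‖b + ε • x‖⁻¹ • (b + ε • x) ∈ U :=
    hcont'.eventually_mem (hU.mem_nhds (by simpa [hb1] using (hmem b (hB hb)).2 hb))
  obtain ⟨ε, ⟨hε0, hεU⟩, hε⟩ :=
    (((hne.and hev).filter_mono nhdsWithin_le_nhds).and
      (self_mem_nhdsWithin (s := Set.Ioi (0 : ℝ)))).exists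
  replace hε : 0 < ε := hε
  have hr : 0 < ‖b + ε • x‖ := norm_pos_iff.2 hε0
  set r := ‖b + ε • x‖ with hrdef
  set c := r⁻¹ • (b + ε • x) with hc
  have hrc : r • c = b + ε • x := smul_inv_smul₀ hr.ne' _
  have hcB : c ∈ B := by
    refine (hmem c ⟨V.smul_mem _ (V.add_mem hbV (V.smul_mem _ hxV)), ?_⟩).1 hεU
    change ‖c‖ = 1
    rw [hc, norm_smul, norm_inv, Real.norm_of_nonneg hr.le, ← hrdef, inv_mul_cancel₀ hr.ne']
  by_cases hcb : c = b
  · have hxb : x = (ε⁻¹ * (r - 1)) • b := by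
      rw [mul_smul, sub_smul, one_smul, ← hcb, hrc, hcb, add_sub_cancel_left,
        inv_smul_smul₀ hε.ne']
    have habs : |ε⁻¹ * (r - 1)| = 1 := by
      rw [hxb, norm_smul, hb1, mul_one, Real.norm_eq_abs] at hx1
      exact hx1
    rcases eq_or_eq_neg_of_abs_eq habs with h | h
    · rw [hxb, h, one_smul]
      exact hBA hb
    · rw [hxb, h, neg_smul, one_smul]
      exact hnb
  · refine hAconv c (hBA hcB) (-b) hnb (fun h => hcb (neg_injective h).symm) ?_
    refine mem_geoSeg_of_cone hx1 hr one_pos hε ?_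
    rw [hrc, one_smul]
    abel
end

section
/- Let E be a finite-dimensional real inner product space with unit sphere S, let A ⊆ S be a closed, spherically convex subset, and suppose there exists u ∈ A with -u ∉ A. Then A, with its subspace topology, is a contractible topological space. (A convex subcomplex containing a simplex with no opposite in the complex is contractible: it contracts to an interior point of that simplex along the unique geodesics.) -/
/-!
A point `v` of `A` is never antipodal to `u`, so the affine segment from `v` to `u` misses the
origin (`combo_ne_zero`). Its radial projection to the sphere is a geodesic from `v` to `u`,
lies in `A` by spherical convexity, and depends continuously on `v`; this contracts `A` to `u`.
-/

open RealInnerProductSpace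

/-- For unit vectors `u`, `v` that are not antipodal, the affine segment from `u` to `v` misses the
origin, so it can be projected radially to the sphere. -/
theorem combo_ne_zero {E : Type*} [NormedAddCommGroup E] [InnerProductSpace ℝ E] {u v : E}
    (hu : ‖u‖ = 1) (hv : ‖v‖ = 1) (huv : v ≠ -u) {s t : ℝ} (hs : 0 ≤ s) (ht : 0 ≤ t)
    (hst : s + t = 1) : s • u + t • v ≠ 0 := by
  intro h
  have h1 : t • v = -(s • u) := eq_neg_of_add_eq_zero_right h
  -- Comparing norms forces `s = t`, so both equal `1 / 2`.
  have h2 : t = s := by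
    simpa [norm_smul, hu, hv, abs_of_nonneg hs, abs_of_nonneg ht] using congrArg norm h1
  subst h2
  have h3 : t ≠ 0 := by intro h0; simp [h0] at hst
  exact huv (smul_right_injective E h3 (by simpa using h1))

theorem contractible_of_no_antipode
    {E : Type*} [NormedAddCommGroup E] [InnerProductSpace ℝ E] [FiniteDimensional ℝ E]
    (A : Set E) (hA : A ⊆ unitSphere E) (hclosed : IsClosed A) (hAconv : SphConvex A)
    (u : E) (huA : u ∈ A) (hnu : -u ∉ A) :
    ContractibleSpace A := by
  have hne (v : A) : (v : E) ≠ -u := fun h => hnu (h ▸ v.2)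
  have hnorm (v : A) : ‖(v : E)‖ = 1 := hA v.2
  have hu : ‖u‖ = 1 := hA huA
  -- The contraction runs along the geodesics to `u`: radially project `τ • u + (1 - τ) • v`.
  let g : unitInterval × A → E := fun p => (p.1 : ℝ) • u + (1 - (p.1 : ℝ)) • (p.2 : E)
  have hg0 (p) : g p ≠ 0 :=
    combo_ne_zero hu (hnorm p.2) (hne p.2) p.1.2.1 (by linarith [p.1.2.2]) (by ring)
  have hgc : Continuous g := by fun_prop
  have hmem (p) : ‖g p‖⁻¹ • g p ∈ A :=
    hAconv u huA p.2 p.2.2 (hne p.2)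
      ⟨p.1, 1 - p.1, p.1.2.1, by linarith [p.1.2.2], by ring, rfl⟩
  have hc : Continuous fun p => ‖g p‖⁻¹ • g p :=
    (hgc.norm.inv₀ fun p => norm_ne_zero_iff.2 (hg0 p)).smul hgc
  rw [contractible_iff_id_nullhomotopic]
  exact ⟨⟨u, huA⟩, ⟨{
    toFun := fun p => ⟨‖g p‖⁻¹ • g p, hmem p⟩
    continuous_toFun := hc.subtype_mk _
    map_zero_left := fun v => Subtype.ext (by simp [g, hnorm])
    map_one_left := fun v => Subtype.ext (by simp [g, hu]) }⟩⟩
end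

section
/- Let E be a finite-dimensional real inner product space with unit sphere S, let W ⊆ E be a linear subspace, let V ⊂ W be a nonzero subspace of codimension 1 in W, and let e ∈ W ∩ S be orthogonal to V. Set H = V ∩ S and Y = {u ∈ W ∩ S : ⟪u, e⟫ ≥ 0}. If A is a spherically convex subset of S with H ⊆ A ⊆ Y, then A = H or A = Y. (A convex subset of a closed hemisphere containing the boundary great sphere is either the boundary great sphere or the whole hemisphere.) -/
open RealInnerProductSpace

/-!
If `A ≠ H`, pick `a ∈ A` outside `V`. Since `W = V ⊕ ℝ e`, write `a = v + c e` with `v ∈ V`; then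
`c = ⟪a, e⟫ > 0`. Any `u = v' + d e` of the open hemisphere (`d > 0`) equals
`(d / c) a + w` with `w = v' - (d / c) v ∈ V`, a nonnegative combination of `a` and of the
point `w / ‖w‖` of `H ⊆ A` (or of `a` alone, when `w = 0`). By `SphConvex.smul_add_smul_mem`,
such a combination of norm one lies in `A`. The points with `d = 0` are those of `H`.
-/

/-- Geodesic segments are normalised *convex* combinations; by homogeneity, a spherically convex
set contains every *nonnegative* combination of norm one of two non-antipodal points. -/
lemma SphConvex.smul_add_smul_mem {E : Type*} [NormedAddCommGroup E] [InnerProductSpace ℝ E]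
    {A : Set E} (hA : SphConvex A) {a b : E} (ha : a ∈ A) (hb : b ∈ A) (hab : b ≠ -a)
    {p q : ℝ} (hp : 0 ≤ p) (hq : 0 ≤ q) (h : ‖p • a + q • b‖ = 1) : p • a + q • b ∈ A := by
  have hpq : 0 < p + q := by
    rcases (add_nonneg hp hq).lt_or_eq with h0 | h0
    · exact h0
    · have hp0 : p = 0 := by linarith
      have hq0 : q = 0 := by linarith
      simp [hp0, hq0] at h
  refine hA a ha b hb hab ⟨p / (p + q), q / (p + q), by positivity, by positivity, ?_, ?_⟩
  · field_simp
  · have e1 : (p / (p + q)) • a + (q / (p + q)) • b = (p + q)⁻¹ • (p • a + q • b) := by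
      rw [smul_add, smul_smul, smul_smul, div_eq_inv_mul, div_eq_inv_mul]
    rw [e1, norm_smul, h, mul_one, norm_inv, Real.norm_of_nonneg hpq.le, inv_inv, smul_smul,
      mul_inv_cancel₀ hpq.ne', one_smul]

/-- A hyperplane `V` of `W` together with a unit vector of `W` orthogonal to `V` spans `W`. -/
lemma exists_eq_add_smul_of_finrank_add_one {E : Type*} [NormedAddCommGroup E]
    [InnerProductSpace ℝ E] [FiniteDimensional ℝ E] {W V : Submodule ℝ E} (hVW : V ≤ W)
    (hcodim : Module.finrank ℝ V + 1 = Module.finrank ℝ W)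
    {e : E} (heW : e ∈ W) (he : ‖e‖ = 1) (heV : ∀ v ∈ V, ⟪e, v⟫ = 0) {u : E} (hu : u ∈ W) :
    ∃ v ∈ V, ∃ c : ℝ, u = v + c • e := by
  have he' : e ∉ V := fun h => by
    have := heV e h
    simp [he] at this
  have hlt : V < V ⊔ ℝ ∙ e := by
    refine lt_of_le_of_ne le_sup_left fun h => he' ?_
    rw [h]
    exact Submodule.mem_sup_right (Submodule.mem_span_singleton_self e)
  have hsup : V ⊔ ℝ ∙ e = W := by
    refine Submodule.eq_of_le_of_finrank_le
      (sup_le hVW ((Submodule.span_singleton_le_iff_mem e W).2 heW)) ?_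
    have := Submodule.finrank_lt_finrank_of_lt hlt
    omega
  rw [← hsup] at hu
  obtain ⟨v, hv, z, hz, rfl⟩ := Submodule.mem_sup.1 hu
  obtain ⟨c, rfl⟩ := Submodule.mem_span_singleton.1 hz
  exact ⟨v, hv, c, rfl⟩

theorem convex_between_great_sphere_and_hemisphere
    {E : Type*} [NormedAddCommGroup E] [InnerProductSpace ℝ E] [FiniteDimensional ℝ E]
    (W V : Submodule ℝ E) (hV : V ≠ ⊥) (hVW : V < W)
    (hcodim : Module.finrank ℝ V + 1 = Module.finrank ℝ W)
    (e : E) (heW : e ∈ W) (he : e ∈ unitSphere E) (heV : ∀ v ∈ V, ⟪e, v⟫ = 0)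
    (A : Set E) (hAconv : SphConvex A)
    (hHA : (V : Set E) ∩ unitSphere E ⊆ A)
    (hAY : A ⊆ {u ∈ (W : Set E) ∩ unitSphere E | 0 ≤ ⟪u, e⟫}) :
    A = (V : Set E) ∩ unitSphere E ∨
      A = {u ∈ (W : Set E) ∩ unitSphere E | 0 ≤ ⟪u, e⟫} := by
  have he1 : ‖e‖ = 1 := he
  have hin : ∀ v ∈ V, ∀ c : ℝ, ⟪v + c • e, e⟫ = c := fun v hv c => by
    rw [inner_add_left, real_inner_comm, heV v hv, real_inner_smul_left,
      real_inner_self_eq_norm_sq, he1]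
    ring
  by_cases hAH : A ⊆ (V : Set E) ∩ unitSphere E
  · exact Or.inl (hAH.antisymm hHA)
  refine Or.inr (hAY.antisymm ?_)
  obtain ⟨a, haA, haH⟩ := Set.not_subset.1 hAH
  obtain ⟨⟨haW, haS⟩, ha0⟩ := hAY haA
  have haV : a ∉ V := fun h => haH ⟨h, haS⟩
  obtain ⟨v, hv, c, hac⟩ := exists_eq_add_smul_of_finrank_add_one hVW.le hcodim heW he1 heV haW
  rw [hac, hin v hv c] at ha0
  have hc : 0 < c := by
    refine ha0.lt_of_ne fun h => haV ?_
    rw [hac, ← h, zero_smul, add_zero]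
    exact hv
  rintro u ⟨⟨huW, huS⟩, hu0⟩
  obtain ⟨v', hv', d, hud⟩ := exists_eq_add_smul_of_finrank_add_one hVW.le hcodim heW he1 heV huW
  rw [hud, hin v' hv' d] at hu0
  rcases hu0.eq_or_lt with hd | hd
  · refine hHA ⟨?_, huS⟩
    rw [hud, ← hd, zero_smul, add_zero]
    exact hv'
  obtain ⟨w, hw⟩ : ∃ w, w = v' - (d / c) • v := ⟨_, rfl⟩
  have hwV : w ∈ V := hw ▸ V.sub_mem hv' (V.smul_mem _ hv)
  have huw : u = (d / c) • a + w := by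
    rw [hud, hac, hw, smul_add, smul_smul, div_mul_cancel₀ d hc.ne']
    abel
  have hu1 : ‖u‖ = 1 := huS
  have hdc : 0 ≤ d / c := by positivity
  by_cases hw0 : w = 0
  · have haa : a ≠ -a := fun h => by
      have h2 : (2 : ℝ) • a = 0 := by rw [two_smul]; exact eq_neg_iff_add_eq_zero.1 h
      exact haV ((smul_eq_zero_iff_right two_ne_zero).1 h2 ▸ V.zero_mem)
    have hua : u = (d / c) • a + (0 : ℝ) • a := by rw [huw, hw0, zero_smul]
    rw [hua] at hu1 ⊢
    exact hAconv.smul_add_smul_mem haA haA haa hdc le_rfl hu1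
  · have hbV : ‖w‖⁻¹ • w ∈ V := V.smul_mem _ hwV
    have hbA : ‖w‖⁻¹ • w ∈ A := hHA ⟨hbV, norm_smul_inv_norm (𝕜 := ℝ) hw0⟩
    have hba : ‖w‖⁻¹ • w ≠ -a := fun h => haV (V.neg_mem_iff.1 (h ▸ hbV))
    have hub : u = (d / c) • a + ‖w‖ • ‖w‖⁻¹ • w := by
      rw [huw, smul_inv_smul₀ (norm_ne_zero_iff.2 hw0)]
    rw [hub] at hu1 ⊢
    exact hAconv.smul_add_smul_mem haA hbA hba hdc (norm_nonneg w) hu1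
end

section
/- Let E be a finite-dimensional real inner product space with unit sphere S, let W ⊆ E be a linear subspace with dim W ≥ 2, let A ⊆ S be spherically convex, and let b ∈ W ∩ S. Suppose A contains a nonempty set U ⊆ W ∩ S with b ∈ U that is open in the subspace topology of W ∩ S, and suppose -b ∈ A. Then W ∩ S ⊆ A. (A small ball about a point together with the antipode of that point generates the whole great sphere inside a convex set.) -/
/-!
Only a point `x ≠ ±b` of `W ∩ S` needs an argument. Moving slightly from `b` towards `x` gives the
point `p = (b + ε • x) / ‖b + ε • x‖`, which lies in `W ∩ S` and, for small `ε > 0`, in `U ⊆ A`.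
Since `ε • x = (b + ε • x) + (-b)`, the point `x` is a normalised nonnegative combination of `p`
and `-b`, i.e. it lies on the geodesic segment `[p, -b]`; and `p ≠ b` because `x` is not a multiple
of `b`. Convexity of `A` then gives `x ∈ A`.
-/

open RealInnerProductSpace

/-- If `x` is a unit vector and `p` is the normalisation of `b + ε • x`, then `x` lies on the
geodesic segment from `p` to `-b`. -/
theorem mem_geoSeg_neg {E : Type*} [NormedAddCommGroup E] [InnerProductSpace ℝ E]
    {b x : E} (hx : ‖x‖ = 1) {ε : ℝ} (hε : 0 < ε) (h0 : b + ε • x ≠ 0) :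
    x ∈ geoSeg (‖b + ε • x‖⁻¹ • (b + ε • x)) (-b) := by
  set N : ℝ := ‖b + ε • x‖ with hN
  have hNpos : 0 < N := norm_pos_iff.mpr h0
  have key : (N / (1 + N)) • (N⁻¹ • (b + ε • x)) + (1 / (1 + N)) • (-b)
      = (ε / (1 + N)) • x := by
    rw [smul_smul, show N / (1 + N) * N⁻¹ = 1 / (1 + N) by field_simp, ← smul_add,
      show b + ε • x + -b = ε • x by abel, smul_smul]
    congr 1
    ring
  have hc : 0 < ε / (1 + N) := by positivity
  refine ⟨N / (1 + N), 1 / (1 + N), by positivity, by positivity, by field_simp; ring, ?_⟩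
  rw [key, norm_smul, hx, mul_one, Real.norm_of_nonneg hc.le, smul_smul,
    inv_mul_cancel₀ hc.ne', one_smul]

/-- Moving slightly from `b` towards `x ≠ ±b` changes the direction of `b`. -/
theorem normalize_add_smul_ne {E : Type*} [NormedAddCommGroup E] [InnerProductSpace ℝ E]
    {b x : E} (hb : ‖b‖ = 1) (hx : ‖x‖ = 1) (h1 : x ≠ b) (h2 : x ≠ -b) {ε : ℝ} (hε : 0 < ε)
    (h0 : b + ε • x ≠ 0) : ‖b + ε • x‖⁻¹ • (b + ε • x) ≠ b := by
  intro h
  have hN : ‖b + ε • x‖ ≠ 0 := norm_ne_zero_iff.mpr h0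
  rw [inv_smul_eq_iff₀ hN] at h
  set N : ℝ := ‖b + ε • x‖
  have hxb : x = (ε⁻¹ * (N - 1)) • b := by
    rw [mul_smul, eq_inv_smul_iff₀ hε.ne', sub_smul, one_smul, ← h]
    abel
  have habs : |ε⁻¹ * (N - 1)| = 1 := by
    have := congrArg norm hxb
    rw [norm_smul, hx, hb, mul_one, Real.norm_eq_abs] at this
    exact this.symm
  rcases eq_or_eq_neg_of_abs_eq habs with hc | hc
  · exact h1 (by rw [hxb, hc, one_smul])
  · exact h2 (by rw [hxb, hc, neg_one_smul])

theorem great_sphere_subset_of_ball_and_antipode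
    {E : Type*} [NormedAddCommGroup E] [InnerProductSpace ℝ E] [FiniteDimensional ℝ E]
    (W : Submodule ℝ E) (hW : 2 ≤ Module.finrank ℝ W)
    (A : Set E) (hA : A ⊆ unitSphere E) (hAconv : SphConvex A)
    (b : E) (hb : b ∈ (W : Set E) ∩ unitSphere E)
    (U : Set E) (hUA : U ⊆ A) (hUW : U ⊆ (W : Set E) ∩ unitSphere E) (hbU : b ∈ U)
    (hUopen : IsOpen (Subtype.val ⁻¹' U : Set ((W : Set E) ∩ unitSphere E : Set E)))
    (hnb : -b ∈ A) :
    (W : Set E) ∩ unitSphere E ⊆ A := by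
  intro x hxWS
  obtain ⟨hxW, hx⟩ := hxWS
  have hb1 : ‖b‖ = 1 := hb.2
  have hx1 : ‖x‖ = 1 := hx
  by_cases h1 : x = b
  · rw [h1]; exact hUA hbU
  by_cases h2 : x = -b
  · rw [h2]; exact hnb
  obtain ⟨O, hO, hOU⟩ := isOpen_induced_iff.mp hUopen
  have hiff : ∀ y (hy : y ∈ (W : Set E) ∩ unitSphere E), y ∈ O ↔ y ∈ U := fun y hy =>
    Set.ext_iff.mp hOU ⟨y, hy⟩
  have hcont : Continuous fun ε : ℝ => b + ε • x := by fun_prop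
  have hb0 : b ≠ 0 := norm_ne_zero_iff.mp (by rw [hb1]; exact one_ne_zero)
  have hne : ∀ᶠ ε : ℝ in nhds 0, b + ε • x ≠ 0 :=
    hcont.continuousAt.eventually_ne (by simpa using hb0)
  have hcont' : ContinuousAt (fun ε : ℝ => ‖b + ε • x‖⁻¹ • (b + ε • x)) 0 :=
    (hcont.norm.continuousAt.inv₀ (by simp [hb1])).smul hcont.continuousAt
  have hmem : ∀ᶠ ε : ℝ in nhds 0, ‖b + ε • x‖⁻¹ • (b + ε • x) ∈ O :=
    hcont'.eventually_mem (hO.mem_nhds (by simpa [hb1] using (hiff b hb).mpr hbU))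
  obtain ⟨ε, ⟨hε0, hεO⟩, hε⟩ := (((hne.and hmem).filter_mono nhdsWithin_le_nhds).and
    (self_mem_nhdsWithin : Set.Ioi (0 : ℝ) ∈ nhdsWithin 0 (Set.Ioi 0))).exists
  have hεpos : 0 < ε := hε
  have hpWS : ‖b + ε • x‖⁻¹ • (b + ε • x) ∈ (W : Set E) ∩ unitSphere E := by
    refine ⟨W.smul_mem _ (W.add_mem hb.1 (W.smul_mem _ hxW)), ?_⟩
    change ‖_‖ = 1
    rw [norm_smul, norm_inv, norm_norm, inv_mul_cancel₀ (norm_ne_zero_iff.mpr hε0)]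
  exact hAconv _ (hUA ((hiff _ hpWS).mp hεO)) _ hnb
    (fun h => normalize_add_smul_ne hb1 hx1 h1 h2 hεpos hε0 (neg_injective h).symm)
    (mem_geoSeg_neg hx1 hεpos hε0)
end

section
/- Let E be a finite-dimensional real inner product space with unit sphere S, and let f : S → S be a map that preserves distances (‖f(x) - f(y)‖ = ‖x - y‖ for all x, y ∈ S) and fixes pointwise a nonempty subset U ⊆ S that is open in the subspace topology of S. Then f is the identity map of S. (If two apartment spheres share a relatively open fundamental domain, the isometry between them fixing the intersection is unique.) -/
/-!
A distance-preserving self-map `f` of the unit sphere preserves inner products, by polarization.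
Hence, for every `y`, the displacement `d = f y - y` is orthogonal to every fixed point of `f`,
in particular to all of `U`. If `d` were nonzero, moving from a point `p` of `U` along the great
circle `t ↦ cos t • p + sin t • d / ‖d‖` would stay inside `U` for small `t > 0`, although the inner
product of such a point with `d` is `sin t * ‖d‖ > 0`.
-/

open RealInnerProductSpace

theorem inner_eq_of_norm_sub_eq {E : Type*} [NormedAddCommGroup E] [InnerProductSpace ℝ E]
    {a b c d : E} (ha : ‖a‖ = 1) (hb : ‖b‖ = 1) (hc : ‖c‖ = 1) (hd : ‖d‖ = 1)
    (h : ‖a - b‖ = ‖c - d‖) : ⟪a, b⟫ = ⟪c, d⟫ := by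
  have h1 := norm_sub_sq_real a b
  have h2 := norm_sub_sq_real c d
  rw [ha, hb, h] at h1
  rw [hc, hd] at h2
  linarith

theorem norm_cos_smul_add_sin_smul {E : Type*} [NormedAddCommGroup E] [InnerProductSpace ℝ E]
    {p e : E} (hp : ‖p‖ = 1) (he : ‖e‖ = 1) (hpe : ⟪p, e⟫ = 0) (t : ℝ) :
    ‖Real.cos t • p + Real.sin t • e‖ = 1 := by
  have h : ‖Real.cos t • p + Real.sin t • e‖ ^ 2 = 1 := by
    rw [norm_add_sq_real, norm_smul, norm_smul, real_inner_smul_left, real_inner_smul_right,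
      hpe, hp, he, mul_one, mul_one, Real.norm_eq_abs, Real.norm_eq_abs, sq_abs, sq_abs]
    linarith [Real.sin_sq_add_cos_sq t]
  exact (pow_eq_one_iff_of_nonneg (norm_nonneg _) two_ne_zero).1 h

/-- A nonempty relatively open subset of the sphere is not contained in any hyperplane through
the origin. -/
theorem eq_zero_of_orthogonal_open {E : Type*} [NormedAddCommGroup E] [InnerProductSpace ℝ E]
    {U : Set (unitSphere E)} (hUne : U.Nonempty) (hUopen : IsOpen U) {d : E}
    (hd : ∀ u ∈ U, ⟪(u : E), d⟫ = 0) : d = 0 := by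
  by_contra hne
  have hd0 : 0 < ‖d‖ := norm_pos_iff.2 hne
  obtain ⟨p, hp⟩ := hUne
  have he : ‖‖d‖⁻¹ • d‖ = 1 := by
    rw [norm_smul, norm_inv, norm_norm, inv_mul_cancel₀ hd0.ne']
  have hpe : ⟪(p : E), ‖d‖⁻¹ • d⟫ = 0 := by
    rw [real_inner_smul_right, hd p hp, mul_zero]
  -- The great circle through `p` in the direction of `d`.
  let c : ℝ → unitSphere E := fun t =>
    ⟨Real.cos t • (p : E) + Real.sin t • (‖d‖⁻¹ • d), norm_cos_smul_add_sin_smul p.2 he hpe t⟩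
  have hc : Continuous c := Continuous.subtype_mk (by fun_prop) _
  have hc0 : c 0 = p := Subtype.ext (by simp [c])
  obtain ⟨ε, hε, hball⟩ := Metric.isOpen_iff.1 (hUopen.preimage hc) 0
    (by rw [Set.mem_preimage, hc0]; exact hp)
  have ht0 : 0 < min (ε / 2) 1 := lt_min (by linarith) one_pos
  have htU : c (min (ε / 2) 1) ∈ U := hball (by
    rw [Metric.mem_ball, Real.dist_0_eq_abs, abs_of_pos ht0]
    linarith [min_le_left (ε / 2) 1])
  have hsin : 0 < Real.sin (min (ε / 2) 1) :=
    Real.sin_pos_of_pos_of_le_one ht0 (min_le_right _ _)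
  have h := hd _ htU
  simp only [c] at h
  rw [inner_add_left, real_inner_smul_left, real_inner_smul_left, real_inner_smul_left, hd p hp,
    real_inner_self_eq_norm_sq] at h
  have : 0 < Real.sin (min (ε / 2) 1) * (‖d‖⁻¹ * ‖d‖ ^ 2) := by positivity
  linarith

theorem isometry_fixing_open_set_is_id
    {E : Type*} [NormedAddCommGroup E] [InnerProductSpace ℝ E] [FiniteDimensional ℝ E]
    (f : unitSphere E → unitSphere E)
    (hf : ∀ x y : unitSphere E, ‖(f x : E) - (f y : E)‖ = ‖(x : E) - (y : E)‖)
    (U : Set (unitSphere E)) (hUne : U.Nonempty) (hUopen : IsOpen U)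
    (hfix : ∀ x ∈ U, f x = x) :
    f = id := by
  funext y
  refine Subtype.ext (sub_eq_zero.1 (eq_zero_of_orthogonal_open hUne hUopen fun u hu => ?_))
  have h := inner_eq_of_norm_sub_eq (f u).2 (f y).2 u.2 y.2 (hf u y)
  rw [hfix u hu] at h
  rw [inner_sub_right, h, id, sub_self]
end
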